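/- There exists a universal constant c > 0 such that for every n and every pair of increasing Boolean functions f, g : C_n → {0,1} with g antipodal, one has Cor(f,g) ≥ c · (Σ_{i∈[n]} I_i(f) I_i(g)) / √(log(2e / Σ_{i∈[n]} I_i(f) I_i(g))). -/

import Mathlib

/-!
Write `T_ρ` for the noise operator on the cube and `∂ᵢ` for the discrete derivatives. The noise form
`⟨f, T_ρ g⟩` interpolates between `E f E g` at `ρ = 0` and `E (f g)` at `ρ = 1`, and its derivative
in `ρ` is `(1/4) ∑ᵢ ⟨∂ᵢ f, T_ρ ∂ᵢ g⟩`, which is nonnegative for increasing functions. At `ρ = 0`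
this derivative is `w / 4`, where `w = ∑ᵢ pᵢ qᵢ`, `pᵢ = E ∂ᵢ f`, `qᵢ = E ∂ᵢ g`, and `4 w` is the sum
of the products of the influences. It suffices to show that the derivative stays above half of this
value for `ρ` up to a constant multiple of `1 / √(log (e / (2 w)))`.

The derivatives are smoothed first: by the semigroup property
`⟨∂ᵢ f, T_ρ ∂ᵢ g⟩ = ⟨Lᵢ, T_{4ρ} Mᵢ⟩` with `Lᵢ = T_{1/2} ∂ᵢ f` and `Mᵢ = T_{1/2} ∂ᵢ g`. These are
nonnegative, and Bessel's inequality under a biased product measure gives `∑ᵢ Lᵢ(x)² ≤ 4/3` at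
every point `x`, likewise for `Mᵢ`.

The main tool is the bound `log ⟨a, T_σ b⟩ ≥ σ ⟨m(a), m(b)⟩ - C σ² (Ent a + Ent b)` for probability
densities `a`, `b` on the cube, with `m` the vector of coordinate means. It is Jensen's inequality
along a coupling of the laws `a` and `b` which reveals the coordinates one at a time and gives each
pair of bits a conditional correlation of order `σ`. As `g` is antipodal, `Mᵢ` is even, its mean
vector vanishes, and the loss is of second order in `σ`; this is the source of the square root.

Finally `∑ᵢ pᵢ qᵢ (Ent (Lᵢ/pᵢ) + Ent (Mᵢ/qᵢ)) ≤ 2 w log (e / (2 w))`. Indeed the left side equals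
`E ∑ᵢ (qᵢ Lᵢ log (Lᵢ/qᵢ) + pᵢ Mᵢ log (Mᵢ/pᵢ))`, because the terms `pᵢ qᵢ log (qᵢ/pᵢ)` cancel, and
`log t ≤ t - 1` with the pointwise bounds on `∑ᵢ Lᵢ²` and `∑ᵢ Mᵢ²` gives the estimate.
-/

open MeasureTheory ProbabilityTheory

noncomputable section

/-- Expectation with respect to the uniform measure on the discrete cube `{-1,1}^n`,
modeled as `Fin n → Bool` (`true ↔ 1`, `false ↔ -1`). -/
def cubeE (n : ℕ) (f : (Fin n → Bool) → ℝ) : ℝ :=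
  (∑ σ : Fin n → Bool, f σ) / 2 ^ n

/-- The discrete derivative `∂ᵢ f (x) = f(x; xᵢ → 1) - f(x; xᵢ → -1)`. -/
def dd (n : ℕ) (i : Fin n) (f : (Fin n → Bool) → ℝ) (σ : Fin n → Bool) : ℝ :=
  f (Function.update σ i true) - f (Function.update σ i false)

/-- The influence `Iᵢ(f) = 2 ∫ |∂ᵢ f| dμ`. -/
def infl (n : ℕ) (f : (Fin n → Bool) → ℝ) (i : Fin n) : ℝ :=
  2 * cubeE n fun σ => |dd n i f σ|

/-- `Cor(f,g) = E[fg] - E[f]E[g]`. -/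
def cubeCor (n : ℕ) (f g : (Fin n → Bool) → ℝ) : ℝ :=
  cubeE n (fun σ => f σ * g σ) - cubeE n f * cubeE n g

/-- `f` is Boolean, i.e. takes values in `{0,1}`. -/
def BoolValued (n : ℕ) (f : (Fin n → Bool) → ℝ) : Prop := ∀ σ, f σ = 0 ∨ f σ = 1

/-- `f` is increasing: all discrete derivatives are nonnegative. -/
def CubeIncreasing (n : ℕ) (f : (Fin n → Bool) → ℝ) : Prop := ∀ i σ, 0 ≤ dd n i f σ

/-- `f` is antipodal: `f(x) = 1 - f(-x)`. -/
def Antipodal (n : ℕ) (f : (Fin n → Bool) → ℝ) : Prop :=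
  ∀ σ, f σ = 1 - f fun k => !(σ k)

section NoiseForm

open Finset Function
open scoped BigOperators

/-- The discrete cube; `spin` turns its points into sign vectors. -/
abbrev BoolCube (n : ℕ) : Type := Fin n → Bool

/-- The sign `±1` encoded by a bit. -/
def spin (b : Bool) : ℝ := if b then 1 else -1

@[simp] lemma spin_true : spin true = 1 := if_pos rfl

@[simp] lemma spin_false : spin false = -1 := if_neg Bool.false_ne_true

@[simp] lemma spin_not (b : Bool) : spin (!b) = -spin b := by cases b <;> simp

lemma spin_mul_self (b : Bool) : spin b * spin b = 1 := by cases b <;> simp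

variable {n : ℕ} {ρ : ℝ} {f g : BoolCube n → ℝ}

/-! ### Expectations over the cube -/

lemma cubeE_eq_expect (f : BoolCube n → ℝ) : cubeE n f = 𝔼 x, f x := by
  simp [cubeE, Fintype.expect_eq_sum_div_card]

lemma expect_bool (F : Bool → ℝ) : 𝔼 b, F b = (F true + F false) / 2 := by
  rw [Fintype.expect_eq_sum_div_card]
  simp

lemma expect_bool_prod (F : Bool × Bool → ℝ) :
    𝔼 z, F z = (F (true, true) + F (true, false) + (F (false, true) + F (false, false))) / 4 := by
  rw [← univ_product_univ, expect_product]
  simp only [expect_bool]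
  ring

lemma expect_cons (F : BoolCube (n + 1) → ℝ) :
    𝔼 x, F x = 𝔼 b, 𝔼 t : BoolCube n, F (Fin.cons b t) := by
  rw [← expect_product' univ univ fun b (t : BoolCube n) => F (Fin.cons b t), univ_product_univ]
  exact (Fintype.expect_equiv (Fin.consEquiv fun _ => Bool) _ _ fun _ => rfl).symm

lemma expect_not (F : BoolCube n → ℝ) : 𝔼 x : BoolCube n, F (fun k => !(x k)) = 𝔼 x, F x :=
  have hinv : Involutive fun (x : BoolCube n) k => !(x k) := fun x => by simp
  Fintype.expect_equiv hinv.toPerm _ _ fun _ => rfl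

lemma expect_update (i : Fin n) (F : BoolCube n → ℝ) :
    𝔼 x, F x = 𝔼 x, 𝔼 b, F (update x i b) := by
  have hinv : Involutive fun x : BoolCube n => update x i !(x i) := fun x => by simp
  have hflip : 𝔼 x, F (update x i !(x i)) = 𝔼 x, F x :=
    Fintype.expect_equiv hinv.toPerm _ _ fun _ => rfl
  have hpair : ∀ x, 𝔼 b, F (update x i b) = (F x + F (update x i !(x i))) / 2 := fun x => by
    rw [expect_bool]
    cases h : x i
    · rw [Bool.not_false, add_comm, ← h, update_eq_self]
    · rw [Bool.not_true, ← h, update_eq_self]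
  simp only [hpair]
  rw [← expect_div, expect_add_distrib, hflip, add_self_div_two]

lemma expect_prod_apply (F : Fin n → Bool → ℝ) :
    𝔼 x : BoolCube n, ∏ i, F i (x i) = ∏ i, 𝔼 b, F i b := by
  simp only [Fintype.expect_eq_sum_div_card, prod_div_distrib, prod_univ_sum,
    Fintype.piFinset_univ]
  simp

lemma dd_update (i : Fin n) (f : BoolCube n → ℝ) (x : BoolCube n) (b : Bool) :
    dd n i f (update x i b) = dd n i f x := by
  simp [dd]

lemma expect_mul_spin_mul (i : Fin n) (f : BoolCube n → ℝ) {h : BoolCube n → ℝ}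
    (hh : ∀ x b, h (update x i b) = h x) :
    𝔼 x, f x * spin (x i) * h x = (𝔼 x, dd n i f x * h x) / 2 := by
  rw [expect_update i, expect_div]
  refine expect_congr rfl fun x _ => ?_
  simp only [expect_bool, hh, dd, update_self, spin_true, spin_false]
  ring

lemma expect_spin_mul (i : Fin n) {h : BoolCube n → ℝ} (hh : ∀ x b, h (update x i b) = h x) :
    𝔼 x, spin (x i) * h x = 0 := by
  simpa [dd] using expect_mul_spin_mul i (fun _ => 1) hh

/-! ### The noise operator -/

/-- The noise kernel `∏ᵢ (1 + ρ xᵢ yᵢ)`: the joint density of a `ρ`-correlated pair of uniform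
points of the cube. -/
def noiseKernel (ρ : ℝ) (x y : BoolCube n) : ℝ := ∏ i, (1 + ρ * (spin (x i) * spin (y i)))

/-- The noise kernel without the factor of coordinate `i`. -/
def noiseKernelErase (ρ : ℝ) (i : Fin n) (x y : BoolCube n) : ℝ :=
  ∏ j ∈ univ.erase i, (1 + ρ * (spin (x j) * spin (y j)))

/-- The noise operator `T_ρ`. -/
def noiseOp (ρ : ℝ) (f : BoolCube n → ℝ) (x : BoolCube n) : ℝ := 𝔼 z, noiseKernel ρ x z * f z

/-- The noise form `⟨f, T_ρ g⟩`. -/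
def noiseForm (ρ : ℝ) (f g : BoolCube n → ℝ) : ℝ := 𝔼 x, f x * noiseOp ρ g x

lemma noiseKernel_eq_mul_erase (ρ : ℝ) (i : Fin n) (x y : BoolCube n) :
    noiseKernel ρ x y = (1 + ρ * (spin (x i) * spin (y i))) * noiseKernelErase ρ i x y :=
  (mul_prod_erase _ _ (mem_univ i)).symm

lemma noiseKernel_comm (ρ : ℝ) (x y : BoolCube n) : noiseKernel ρ x y = noiseKernel ρ y x := by
  simp only [noiseKernel, mul_comm (spin (x _))]

lemma noiseKernelErase_comm (ρ : ℝ) (i : Fin n) (x y : BoolCube n) :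
    noiseKernelErase ρ i x y = noiseKernelErase ρ i y x := by
  simp only [noiseKernelErase, mul_comm (spin (x _))]

lemma noiseKernelErase_update (ρ : ℝ) (i : Fin n) (x y : BoolCube n) (b : Bool) :
    noiseKernelErase ρ i x (update y i b) = noiseKernelErase ρ i x y :=
  prod_congr rfl fun j hj => by rw [update_of_ne (ne_of_mem_erase hj)]

lemma noiseKernel_nonneg (h0 : 0 ≤ ρ) (h1 : ρ ≤ 1) (x y : BoolCube n) :
    0 ≤ noiseKernel ρ x y :=
  prod_nonneg fun i _ => by cases x i <;> cases y i <;> simp <;> linarith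

lemma noiseKernel_pos (h0 : 0 ≤ ρ) (h1 : ρ < 1) (x y : BoolCube n) : 0 < noiseKernel ρ x y :=
  prod_pos fun i _ => by cases x i <;> cases y i <;> simp <;> linarith

lemma noiseKernel_zero (x y : BoolCube n) : noiseKernel 0 x y = 1 := by simp [noiseKernel]

lemma noiseKernel_one (x y : BoolCube n) : noiseKernel 1 x y = if x = y then 2 ^ n else 0 := by
  split_ifs with h
  · simp [noiseKernel, h, spin_mul_self, one_add_one_eq_two]
  · obtain ⟨i, hi⟩ := ne_iff.mp h
    refine prod_eq_zero (mem_univ i) ?_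
    rw [Bool.eq_not_of_ne hi, spin_not, neg_mul, spin_mul_self]
    norm_num

lemma expect_noiseKernel_mul_noiseKernel (α β : ℝ) (x y : BoolCube n) :
    𝔼 z, noiseKernel α x z * noiseKernel β z y = noiseKernel (α * β) x y := by
  simp only [noiseKernel, ← prod_mul_distrib]
  rw [expect_prod_apply fun i b =>
    (1 + α * (spin (x i) * spin b)) * (1 + β * (spin b * spin (y i)))]
  refine prod_congr rfl fun i _ => ?_
  simp only [expect_bool, spin_true, spin_false]
  ring

lemma expect_noiseKernel (ρ : ℝ) (x : BoolCube n) : 𝔼 z, noiseKernel ρ x z = 1 := by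
  simpa [noiseKernel_zero] using expect_noiseKernel_mul_noiseKernel ρ 0 x x

lemma noiseOp_zero (f : BoolCube n → ℝ) (x : BoolCube n) : noiseOp 0 f x = 𝔼 z, f z := by
  simp only [noiseOp, noiseKernel_zero, one_mul]

lemma noiseOp_one (f : BoolCube n → ℝ) (x : BoolCube n) : noiseOp 1 f x = f x := by
  simp only [noiseOp, noiseKernel_one]
  rw [Fintype.expect_eq_sum_div_card]
  simp

lemma noiseOp_noiseOp (α β : ℝ) (f : BoolCube n → ℝ) (x : BoolCube n) :
    noiseOp α (noiseOp β f) x = noiseOp (α * β) f x := by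
  simp only [noiseOp, mul_expect, ← expect_noiseKernel_mul_noiseKernel α β, expect_mul, mul_assoc]
  exact expect_comm _ _ _

lemma noiseOp_nonneg (h0 : 0 ≤ ρ) (h1 : ρ ≤ 1) (hf : ∀ x, 0 ≤ f x) (x : BoolCube n) :
    0 ≤ noiseOp ρ f x :=
  expect_nonneg fun z _ => mul_nonneg (noiseKernel_nonneg h0 h1 x z) (hf z)

lemma noiseOp_pos (h0 : 0 ≤ ρ) (h1 : ρ < 1) (hf : ∀ x, 0 ≤ f x) (hne : f ≠ 0) (x : BoolCube n) :
    0 < noiseOp ρ f x := by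
  obtain ⟨z, hz⟩ := ne_iff.mp hne
  exact expect_pos' (fun y _ => mul_nonneg (noiseKernel_nonneg h0 h1.le x y) (hf y))
    ⟨z, mem_univ z, mul_pos (noiseKernel_pos h0 h1 x z) ((hf z).lt_of_ne' hz)⟩

lemma noiseForm_zero (f g : BoolCube n → ℝ) : noiseForm 0 f g = (𝔼 x, f x) * 𝔼 x, g x := by
  simp only [noiseForm, noiseOp_zero, expect_mul]

lemma noiseForm_one (f g : BoolCube n → ℝ) : noiseForm 1 f g = 𝔼 x, f x * g x := by
  simp only [noiseForm, noiseOp_one]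

lemma noiseForm_comm (ρ : ℝ) (f g : BoolCube n → ℝ) : noiseForm ρ f g = noiseForm ρ g f := by
  simp only [noiseForm, noiseOp, mul_expect]
  rw [expect_comm]
  refine expect_congr rfl fun x _ => expect_congr rfl fun y _ => ?_
  rw [noiseKernel_comm]
  ring

lemma noiseForm_noiseOp (α β σ : ℝ) (f g : BoolCube n → ℝ) :
    noiseForm σ (noiseOp α f) (noiseOp β g) = noiseForm (α * σ * β) f g := by
  have hright : ∀ τ γ (f g : BoolCube n → ℝ),
      noiseForm τ f (noiseOp γ g) = noiseForm (τ * γ) f g := fun τ γ f g => by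
    simp only [noiseForm, noiseOp_noiseOp]
  rw [hright, noiseForm_comm, hright, noiseForm_comm]
  ring_nf

lemma noiseForm_const_mul (ρ c d : ℝ) (f g : BoolCube n → ℝ) :
    noiseForm ρ (fun x => c * f x) (fun x => d * g x) = c * d * noiseForm ρ f g := by
  simp only [noiseForm, noiseOp, mul_expect]
  exact expect_congr rfl fun x _ => expect_congr rfl fun y _ => by ring

lemma noiseForm_nonneg (h0 : 0 ≤ ρ) (h1 : ρ ≤ 1) (hf : ∀ x, 0 ≤ f x) (hg : ∀ x, 0 ≤ g x) :
    0 ≤ noiseForm ρ f g :=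
  expect_nonneg fun x _ => mul_nonneg (hf x) (noiseOp_nonneg h0 h1 hg x)

lemma noiseForm_pos (h0 : 0 ≤ ρ) (h1 : ρ < 1) (hf : ∀ x, 0 < f x) (hg : ∀ x, 0 < g x) :
    0 < noiseForm ρ f g :=
  expect_pos (fun x _ => mul_pos (hf x) <| expect_pos (fun z _ =>
    mul_pos (noiseKernel_pos h0 h1 x z) (hg z)) univ_nonempty) univ_nonempty

lemma noiseForm_cons (ρ : ℝ) (f g : BoolCube (n + 1) → ℝ) :
    noiseForm ρ f g = 𝔼 z : Bool × Bool, (1 + ρ * (spin z.1 * spin z.2)) *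
      noiseForm ρ (fun t => f (Fin.cons z.1 t)) (fun t => g (Fin.cons z.2 t)) := by
  have hkernel : ∀ (b c : Bool) (s t : BoolCube n),
      noiseKernel ρ (Fin.cons b s : BoolCube (n + 1)) (Fin.cons c t)
        = (1 + ρ * (spin b * spin c)) * noiseKernel ρ s t := fun b c s t => by
    simp [noiseKernel, Fin.prod_univ_succ]
  rw [← univ_product_univ, expect_product]
  simp only [noiseForm, noiseOp, expect_cons, hkernel, mul_expect]
  refine expect_congr rfl fun b _ => ?_
  rw [expect_comm]
  exact expect_congr rfl fun c _ => expect_congr rfl fun s _ => expect_congr rfl fun t _ => by ring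

/-! ### Differentiation of the noise form -/

lemma noiseOp_dd (ρ : ℝ) (i : Fin n) (f : BoolCube n → ℝ) (x : BoolCube n) :
    noiseOp ρ (dd n i f) x = 𝔼 z, dd n i f z * noiseKernelErase ρ i x z := by
  have hfree : ∀ z b, dd n i f (update z i b) * noiseKernelErase ρ i x (update z i b)
      = dd n i f z * noiseKernelErase ρ i x z := fun z b => by
    rw [dd_update, noiseKernelErase_update]
  calc noiseOp ρ (dd n i f) x
      = 𝔼 z, (dd n i f z * noiseKernelErase ρ i x z
          + ρ * spin (x i) * (spin (z i) * (dd n i f z * noiseKernelErase ρ i x z))) :=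
        expect_congr rfl fun z _ => by rw [noiseKernel_eq_mul_erase ρ i]; ring
    _ = 𝔼 z, dd n i f z * noiseKernelErase ρ i x z := by
        rw [expect_add_distrib, ← mul_expect, expect_spin_mul i hfree, mul_zero, add_zero]

lemma expect_mul_spin_mul_noiseKernelErase (ρ : ℝ) (i : Fin n) (f : BoolCube n → ℝ)
    (x : BoolCube n) :
    𝔼 z, f z * spin (z i) * noiseKernelErase ρ i x z = noiseOp ρ (dd n i f) x / 2 := by
  rw [noiseOp_dd, expect_mul_spin_mul i f (noiseKernelErase_update ρ i x)]

lemma noiseOp_dd_update (ρ : ℝ) (i : Fin n) (f : BoolCube n → ℝ) (x : BoolCube n) (b : Bool) :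
    noiseOp ρ (dd n i f) (update x i b) = noiseOp ρ (dd n i f) x := by
  simp only [noiseOp_dd]
  refine expect_congr rfl fun z _ => ?_
  rw [noiseKernelErase_comm, noiseKernelErase_update, noiseKernelErase_comm]

lemma hasDerivAt_expect {ι : Type*} [Fintype ι] {F : ι → ℝ → ℝ} {F' : ι → ℝ} {s : ℝ}
    (hF : ∀ i, HasDerivAt (F i) (F' i) s) :
    HasDerivAt (fun t => 𝔼 i, F i t) (𝔼 i, F' i) s := by
  simp only [Fintype.expect_eq_sum_div_card]
  exact (HasDerivAt.fun_sum fun i _ => hF i).div_const _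

lemma hasDerivAt_noiseKernel (ρ : ℝ) (x y : BoolCube n) :
    HasDerivAt (fun s => noiseKernel s x y)
      (∑ i, noiseKernelErase ρ i x y * (spin (x i) * spin (y i))) ρ := by
  simpa [noiseKernel, noiseKernelErase] using HasDerivAt.fun_finsetProd fun i (_ : i ∈ univ) =>
    ((hasDerivAt_id ρ).mul_const (spin (x i) * spin (y i))).const_add 1

lemma hasDerivAt_noiseOp (ρ : ℝ) (g : BoolCube n → ℝ) (x : BoolCube n) :
    HasDerivAt (fun s => noiseOp s g x) ((∑ i, spin (x i) * noiseOp ρ (dd n i g) x) / 2) ρ := by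
  refine (hasDerivAt_expect fun z =>
    (hasDerivAt_noiseKernel ρ x z).mul_const (g z)).congr_deriv ?_
  simp only [sum_mul, expect_sum_comm, sum_div, mul_div_assoc,
    ← expect_mul_spin_mul_noiseKernelErase, mul_expect]
  exact sum_congr rfl fun i _ => expect_congr rfl fun z _ => by ring

lemma hasDerivAt_noiseForm (ρ : ℝ) (f g : BoolCube n → ℝ) :
    HasDerivAt (fun s => noiseForm s f g) ((∑ i, noiseForm ρ (dd n i f) (dd n i g)) / 4) ρ := by
  refine (hasDerivAt_expect fun x =>
    (hasDerivAt_noiseOp ρ g x).const_mul (f x)).congr_deriv ?_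
  have hparts : ∀ i, noiseForm ρ (dd n i f) (dd n i g) / 4
      = 𝔼 x, f x * (spin (x i) * noiseOp ρ (dd n i g) x / 2) := fun i => by
    simp only [← mul_div_assoc, ← mul_assoc, ← expect_div]
    rw [expect_mul_spin_mul i f (noiseOp_dd_update ρ i g), noiseForm]
    ring
  simp only [sum_div, hparts, mul_sum, expect_sum_comm]

lemma monotoneOn_noiseForm (hf : CubeIncreasing n f) (hg : CubeIncreasing n g) :
    MonotoneOn (fun s => noiseForm s f g) (Set.Icc 0 1) := by
  refine monotoneOn_of_deriv_nonneg (convex_Icc 0 1)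
    (fun s _ => (hasDerivAt_noiseForm s f g).continuousAt.continuousWithinAt)
    (fun s _ => (hasDerivAt_noiseForm s f g).differentiableAt.differentiableWithinAt)
    fun s hs => ?_
  rw [interior_Icc] at hs
  rw [(hasDerivAt_noiseForm s f g).deriv]
  exact div_nonneg (sum_nonneg fun i _ =>
    noiseForm_nonneg hs.1.le hs.2.le (hf i) (hg i)) zero_le_four

/-! ### Bessel's inequality for the gradient -/

lemma sum_sq_expect_mul_le {ι Ω : Type*} [Fintype ι] [DecidableEq ι] [Fintype Ω] {κ : Ω → ℝ}
    {ζ : ι → Ω → ℝ} {s : ℝ} (hκ : ∀ ω, 0 ≤ κ ω) (hs : 0 < s)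
    (horth : ∀ i j, 𝔼 ω, κ ω * (ζ i ω * ζ j ω) = if i = j then s else 0) (φ : Ω → ℝ) :
    ∑ i, (𝔼 ω, κ ω * (φ ω * ζ i ω)) ^ 2 ≤ s * 𝔼 ω, κ ω * φ ω ^ 2 := by
  set c : ι → ℝ := fun i => 𝔼 ω, κ ω * (φ ω * ζ i ω)
  set S : Ω → ℝ := fun ω => ∑ i, c i * ζ i ω
  have hS : ∀ ψ : Ω → ℝ, 𝔼 ω, κ ω * (ψ ω * S ω) = ∑ i, c i * 𝔼 ω, κ ω * (ψ ω * ζ i ω) := by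
    intro ψ
    simp only [S, mul_sum, expect_sum_comm, mul_expect, mul_left_comm]
  have hζS : ∀ i, 𝔼 ω, κ ω * (S ω * ζ i ω) = c i * s := fun i => by
    simp only [mul_comm (S _), hS, horth, mul_ite, mul_zero, sum_ite_eq, mem_univ, if_true]
  have hexpand : 𝔼 ω, κ ω * (s * φ ω - S ω) ^ 2 = s * (s * 𝔼 ω, κ ω * φ ω ^ 2 - ∑ i, c i ^ 2) :=
    calc 𝔼 ω, κ ω * (s * φ ω - S ω) ^ 2
        = 𝔼 ω, (s ^ 2 * (κ ω * φ ω ^ 2) - 2 * s * (κ ω * (φ ω * S ω)) + κ ω * (S ω * S ω)) :=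
          expect_congr rfl fun ω _ => by ring
      _ = s ^ 2 * 𝔼 ω, κ ω * φ ω ^ 2 - 2 * s * ∑ i, c i * c i + ∑ i, c i * (c i * s) := by
          rw [expect_add_distrib, expect_sub_distrib, ← mul_expect, ← mul_expect, hS φ, hS S]
          simp only [hζS, c]
      _ = s * (s * 𝔼 ω, κ ω * φ ω ^ 2 - ∑ i, c i ^ 2) := by
          simp only [← mul_assoc, ← sum_mul, ← sq]
          ring
  have hnonneg : 0 ≤ 𝔼 ω, κ ω * (s * φ ω - S ω) ^ 2 :=
    expect_nonneg fun ω _ => mul_nonneg (hκ ω) (sq_nonneg _)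
  rw [hexpand] at hnonneg
  exact sub_nonneg.mp (nonneg_of_mul_nonneg_right hnonneg hs)

lemma expect_noiseKernel_mul_centred (ρ : ℝ) (i : Fin n) (f : BoolCube n → ℝ) (x : BoolCube n) :
    𝔼 z, noiseKernel ρ x z * (f z * (spin (z i) - ρ * spin (x i)))
      = (1 - ρ ^ 2) / 2 * noiseOp ρ (dd n i f) x := by
  have hcentre : ∀ z : BoolCube n, noiseKernel ρ x z * (f z * (spin (z i) - ρ * spin (x i)))
      = (1 - ρ ^ 2) * (f z * spin (z i) * noiseKernelErase ρ i x z) := fun z => by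
    rw [noiseKernel_eq_mul_erase ρ i]
    cases x i <;> cases z i <;> simp only [spin_true, spin_false] <;> ring
  simp only [hcentre]
  rw [← mul_expect, expect_mul_spin_mul_noiseKernelErase]
  ring

lemma expect_noiseKernel_mul_centred_mul_centred (ρ : ℝ) (i j : Fin n) (x : BoolCube n) :
    𝔼 z, noiseKernel ρ x z * ((spin (z i) - ρ * spin (x i)) * (spin (z j) - ρ * spin (x j)))
      = if i = j then 1 - ρ ^ 2 else 0 := by
  have hdd : dd n j (fun z => spin (z i) - ρ * spin (x i)) = fun _ => if i = j then 2 else 0 := by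
    ext z
    rcases eq_or_ne i j with rfl | h
    · simp [dd, one_add_one_eq_two]
    · simp [dd, h]
  rw [expect_noiseKernel_mul_centred ρ j (fun z => spin (z i) - ρ * spin (x i)), hdd, noiseOp,
    ← expect_mul, expect_noiseKernel]
  split_ifs <;> ring

lemma one_sub_sq_mul_sum_noiseOp_dd_sq_le (h0 : 0 ≤ ρ) (h1 : ρ < 1)
    (hf : ∀ x, f x ∈ Set.Icc 0 1) (x : BoolCube n) :
    (1 - ρ ^ 2) * ∑ i, noiseOp ρ (dd n i f) x ^ 2 ≤ 1 := by
  have hs : 0 < 1 - ρ ^ 2 := by nlinarith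
  have hbessel := sum_sq_expect_mul_le (noiseKernel_nonneg h0 h1.le x) hs
    (fun i j => expect_noiseKernel_mul_centred_mul_centred ρ i j x) fun z => f z - 1 / 2
  have hdd : ∀ i, dd n i (fun z => f z - 1 / 2) = dd n i f := fun i => by
    ext z
    simp [dd]
  have hhalf : 𝔼 z, noiseKernel ρ x z * (f z - 1 / 2) ^ 2 ≤ 1 / 4 :=
    calc 𝔼 z, noiseKernel ρ x z * (f z - 1 / 2) ^ 2
        ≤ 𝔼 z, noiseKernel ρ x z * (1 / 4) := expect_le_expect fun z _ =>
          mul_le_mul_of_nonneg_left (by nlinarith [(hf z).1, (hf z).2])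
            (noiseKernel_nonneg h0 h1.le x z)
      _ = 1 / 4 := by rw [← expect_mul, expect_noiseKernel, one_mul]
  simp only [expect_noiseKernel_mul_centred, hdd, mul_pow, ← mul_sum] at hbessel
  nlinarith

lemma sum_expect_dd_sq_le (hf : ∀ x, f x ∈ Set.Icc 0 1) : ∑ i, (𝔼 x, dd n i f x) ^ 2 ≤ 1 := by
  simpa [noiseOp_zero] using one_sub_sq_mul_sum_noiseOp_dd_sq_le le_rfl zero_lt_one hf fun _ => true

lemma sum_expect_noiseOp_half_dd_sq_le (hf : ∀ x, f x ∈ Set.Icc 0 1) :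
    ∑ i, 𝔼 x, noiseOp (1 / 2) (dd n i f) x ^ 2 ≤ 4 / 3 := by
  rw [← expect_sum_comm]
  refine expect_le univ_nonempty fun x _ => ?_
  have := one_sub_sq_mul_sum_noiseOp_dd_sq_le (by norm_num) (by norm_num : (1 / 2 : ℝ) < 1) hf x
  linarith

/-! ### Entropy and coordinate means -/

section Entropy

variable {Ω : Type*} [Fintype Ω] {a b : Ω → ℝ}

/-- The entropy functional `Ent a = E (a log a) - (E a) log (E a)` with respect to the uniform
measure; since `Real.log 0 = 0`, the convention `0 log 0 = 0` is built in. -/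
def entropy (a : Ω → ℝ) : ℝ := 𝔼 x, a x * Real.log (a x) - (𝔼 x, a x) * Real.log (𝔼 x, a x)

/-- Positive probability densities with respect to the uniform measure. -/
structure IsPosDensity (a : Ω → ℝ) : Prop where
  pos (x : Ω) : 0 < a x
  expect_eq_one : 𝔼 x, a x = 1

/-- The density proportional to `a`; identically zero when `E a = 0`. -/
def normalized (a : Ω → ℝ) (x : Ω) : ℝ := a x / 𝔼 y, a y

lemma IsPosDensity.entropy_eq (ha : IsPosDensity a) : entropy a = 𝔼 x, a x * Real.log (a x) := by
  rw [entropy, ha.expect_eq_one, Real.log_one, mul_zero, sub_zero]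

variable [Nonempty Ω]

lemma expect_mul_normalized (ha : ∀ x, 0 < a x) : (fun x => (𝔼 y, a y) * normalized a x) = a := by
  ext x
  exact mul_div_cancel₀ _ (expect_pos (fun y _ => ha y) univ_nonempty).ne'

lemma isPosDensity_normalized (ha : ∀ x, 0 < a x) : IsPosDensity (normalized a) where
  pos x := div_pos (ha x) (expect_pos (fun y _ => ha y) univ_nonempty)
  expect_eq_one := by
    simp only [normalized]
    rw [← expect_div, div_self (expect_pos (fun y _ => ha y) univ_nonempty).ne']

lemma entropy_eq_expect_mul_entropy_normalized (ha : ∀ x, 0 < a x) :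
    entropy a = (𝔼 x, a x) * entropy (normalized a) := by
  have hmean : 0 < 𝔼 x, a x := expect_pos (fun y _ => ha y) univ_nonempty
  rw [(isPosDensity_normalized ha).entropy_eq]
  have hlog : ∀ x, (𝔼 y, a y) * (normalized a x * Real.log (normalized a x))
      = a x * Real.log (a x) - a x * Real.log (𝔼 y, a y) := fun x => by
    rw [← mul_assoc, congr_fun (expect_mul_normalized ha) x, normalized,
      Real.log_div (ha x).ne' hmean.ne', mul_sub]
  simp only [mul_expect, hlog]
  rw [expect_sub_distrib, ← expect_mul, entropy]

end Entropy

lemma entropy_cons (a : BoolCube (n + 1) → ℝ) :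
    entropy a = entropy (fun b => 𝔼 t : BoolCube n, a (Fin.cons b t))
      + 𝔼 b, entropy fun t : BoolCube n => a (Fin.cons b t) := by
  simp only [entropy, expect_cons, expect_sub_distrib]
  ring

/-- The vector of means of the coordinates under the weight `a`. -/
def coordMean (a : BoolCube n → ℝ) (k : Fin n) : ℝ := 𝔼 x, a x * spin (x k)

/-- The conditional density of the remaining coordinates given that the first one is `b`. -/
def condDensity (a : BoolCube (n + 1) → ℝ) (b : Bool) : BoolCube n → ℝ :=
  normalized fun t => a (Fin.cons b t)

section PosDensity

variable {a : BoolCube (n + 1) → ℝ} (ha : IsPosDensity a)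
include ha

lemma IsPosDensity.expect_fin_cons (b : Bool) :
    𝔼 t : BoolCube n, a (Fin.cons b t) = 1 + spin b * coordMean a 0 := by
  have htotal := ha.expect_eq_one
  rw [expect_cons, expect_bool] at htotal
  simp only [coordMean, expect_cons, Fin.cons_zero, ← expect_mul, expect_bool, spin_true,
    spin_false]
  cases b <;> simp only [spin_true, spin_false] <;> linarith

lemma IsPosDensity.one_add_spin_mul_coordMean_pos (b : Bool) : 0 < 1 + spin b * coordMean a 0 :=
  ha.expect_fin_cons b ▸ expect_pos (fun t _ => ha.pos (Fin.cons b t)) univ_nonempty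

lemma IsPosDensity.cond (b : Bool) : IsPosDensity (condDensity a b) :=
  isPosDensity_normalized fun t => ha.pos (Fin.cons b t)

lemma IsPosDensity.fin_cons_eq (b : Bool) :
    (fun t : BoolCube n => a (Fin.cons b t))
      = fun t => (1 + spin b * coordMean a 0) * condDensity a b t := by
  rw [← ha.expect_fin_cons b]
  exact (expect_mul_normalized fun t => ha.pos (Fin.cons b t)).symm

lemma IsPosDensity.coordMean_succ (k : Fin n) :
    coordMean a k.succ
      = 𝔼 b, (1 + spin b * coordMean a 0) * coordMean (condDensity a b) k := by
  rw [coordMean, expect_cons]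
  simp only [congr_fun (ha.fin_cons_eq _), Fin.cons_succ, mul_assoc, ← mul_expect]
  rfl

lemma IsPosDensity.entropy_eq_add_expect :
    entropy a = entropy (fun b => 1 + spin b * coordMean a 0)
      + 𝔼 b, (1 + spin b * coordMean a 0) * entropy (condDensity a b) := by
  simp only [entropy_cons a, ← ha.expect_fin_cons]
  congr 1
  exact expect_congr rfl fun b _ =>
    entropy_eq_expect_mul_entropy_normalized fun t => ha.pos (Fin.cons b t)

end PosDensity

/-! ### Coupled pairs of biased bits -/

lemma sub_one_add_sq_div_six_le_mul_log {x : ℝ} (hx : 0 < x) (hx2 : x ≤ 2) :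
    (x - 1) + (x - 1) ^ 2 / 6 ≤ x * Real.log x := by
  have hr : 0 < √x := Real.sqrt_pos.mpr hx
  have hsq : √x ^ 2 = x := Real.sq_sqrt hx.le
  have hsqrt_le : √x ≤ 1.42 := by
    rw [Real.sqrt_le_left (by norm_num)]
    norm_num
    linarith
  have hhellinger : (x - 1) ^ 2 / 6 ≤ (√x - 1) ^ 2 := by
    rw [show x - 1 = (√x - 1) * (√x + 1) by linear_combination -hsq, mul_pow]
    have hfactor : (√x + 1) ^ 2 ≤ 6 := by nlinarith
    nlinarith [mul_le_mul_of_nonneg_left hfactor (sq_nonneg (√x - 1))]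
  calc (x - 1) + (x - 1) ^ 2 / 6 ≤ (x - 1) + (√x - 1) ^ 2 := by gcongr
    _ = 2 * (x * (1 - (√x)⁻¹)) := by
      rw [← hsq]
      field_simp
      rw [Real.sqrt_sq hr.le]
      ring
    _ ≤ 2 * (x * Real.log (√x)) := by
      gcongr
      exact Real.one_sub_inv_le_log_of_pos hr
    _ = x * Real.log x := by
      rw [Real.log_sqrt hx.le]
      ring

lemma sq_div_six_le_entropy_bit {u : ℝ} (hu : ∀ b, 0 < 1 + spin b * u) :
    u ^ 2 / 6 ≤ entropy fun b => 1 + spin b * u := by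
  have ht := hu true
  have hf := hu false
  have hdensity : IsPosDensity fun b => 1 + spin b * u := ⟨hu, by
    rw [expect_bool, spin_true, spin_false]
    ring⟩
  rw [hdensity.entropy_eq, expect_bool]
  simp only [spin_true, spin_false] at *
  linarith [sub_one_add_sq_div_six_le_mul_log ht (by linarith),
    sub_one_add_sq_div_six_le_mul_log hf (by linarith)]

/-- The joint density of two bits with means `u` and `v`, coupled so that their covariance is
`ρ (1 - u²) (1 - v²)`. -/
def bitCoupling (ρ u v : ℝ) (z : Bool × Bool) : ℝ :=
  (1 + spin z.1 * u) * (1 + spin z.2 * v) * (1 + ρ * ((spin z.1 - u) * (spin z.2 - v)))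

/-- The ratio between the noise kernel on a pair of bits and the correlation factor of
`bitCoupling`. -/
def couplingRatio (ρ u v : ℝ) (z : Bool × Bool) : ℝ :=
  (1 + ρ * (spin z.1 * spin z.2)) / (1 + ρ * ((spin z.1 - u) * (spin z.2 - v)))

lemma expect_bitCoupling_mul_fst (ρ u v : ℝ) (G : Bool → ℝ) :
    𝔼 z, bitCoupling ρ u v z * G z.1 = 𝔼 b, (1 + spin b * u) * G b := by
  simp only [expect_bool_prod, expect_bool, bitCoupling, spin_true, spin_false]
  ring

lemma expect_bitCoupling_mul_snd (ρ u v : ℝ) (G : Bool → ℝ) :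
    𝔼 z, bitCoupling ρ u v z * G z.2 = 𝔼 b, (1 + spin b * v) * G b := by
  simp only [expect_bool_prod, expect_bool, bitCoupling, spin_true, spin_false]
  ring

lemma expect_bitCoupling (ρ u v : ℝ) : 𝔼 z, bitCoupling ρ u v z = 1 := by
  simp only [expect_bool_prod, bitCoupling, spin_true, spin_false]
  ring

/-- The form `ρ s t + ρ² (s² + t²) / 2`; its square terms absorb the loss in covariance caused by
`bitCoupling`, which makes the means pass through the induction on the dimension. -/
def meanForm (ρ s t : ℝ) : ℝ := ρ * (s * t) + ρ ^ 2 / 2 * (s ^ 2 + t ^ 2)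

lemma sq_lt_one_of_one_add_spin_mul_pos {u : ℝ} (hu : ∀ b, 0 < 1 + spin b * u) : u ^ 2 < 1 := by
  have htrue := hu true
  have hfalse := hu false
  simp only [spin_true, spin_false] at htrue hfalse
  nlinarith

lemma three_quarters_le_one_add_mul_spin_mul_spin (h0 : 0 ≤ ρ) (h1 : ρ ≤ 1 / 4) (b c : Bool) :
    3 / 4 ≤ 1 + ρ * (spin b * spin c) := by
  cases b <;> cases c <;> simp only [spin_true, spin_false] <;> linarith

section BitCoupling

variable {u v : ℝ} (hu : ∀ b, 0 < 1 + spin b * u) (hv : ∀ b, 0 < 1 + spin b * v)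
include hu hv

lemma meanForm_le_expect_bitCoupling_mul (ρ : ℝ) (m m' : Bool → ℝ) :
    meanForm ρ (𝔼 b, (1 + spin b * u) * m b) (𝔼 b, (1 + spin b * v) * m' b)
      ≤ 𝔼 z, bitCoupling ρ u v z * meanForm ρ (m z.1) (m' z.2) := by
  set d := (m true - m false) / 2
  set d' := (m' true - m' false) / 2
  have hU : 0 ≤ 1 - u ^ 2 := sub_nonneg.mpr (sq_lt_one_of_one_add_spin_mul_pos hu).le
  have hV : 0 ≤ 1 - v ^ 2 := sub_nonneg.mpr (sq_lt_one_of_one_add_spin_mul_pos hv).le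
  have hvar : 0 ≤ (1 - u ^ 2) * (1 - v ^ 2) * (d * d')
      + ((1 - u ^ 2) * d ^ 2 + (1 - v ^ 2) * d' ^ 2) / 2 := by
    nlinarith [mul_nonneg (mul_nonneg hU hV) (sq_nonneg (d + d')),
      mul_nonneg hU (mul_nonneg (sq_nonneg v) (sq_nonneg d)),
      mul_nonneg hV (mul_nonneg (sq_nonneg u) (sq_nonneg d'))]
  have hgap : 𝔼 z, bitCoupling ρ u v z * meanForm ρ (m z.1) (m' z.2)
      = meanForm ρ (𝔼 b, (1 + spin b * u) * m b) (𝔼 b, (1 + spin b * v) * m' b)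
        + ρ ^ 2 * ((1 - u ^ 2) * (1 - v ^ 2) * (d * d')
          + ((1 - u ^ 2) * d ^ 2 + (1 - v ^ 2) * d' ^ 2) / 2) := by
    simp only [d, d', meanForm, expect_bool_prod, expect_bool, bitCoupling, spin_true, spin_false]
    ring
  rw [hgap]
  exact le_add_of_nonneg_right (mul_nonneg (sq_nonneg ρ) hvar)

variable (h0 : 0 ≤ ρ) (h1 : ρ ≤ 1 / 4)
include h0 h1

lemma one_add_mul_spin_sub_mul_spin_sub_pos (b c : Bool) :
    0 < 1 + ρ * ((spin b - u) * (spin c - v)) := by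
  have hsq : ∀ {w : ℝ}, w ^ 2 < 1 → ∀ b, (spin b - w) ^ 2 < 4 := fun hw b => by
    cases b <;> simp only [spin_true, spin_false] <;> nlinarith
  have hgt : -4 < (spin b - u) * (spin c - v) := by
    nlinarith [hsq (sq_lt_one_of_one_add_spin_mul_pos hu) b,
      hsq (sq_lt_one_of_one_add_spin_mul_pos hv) c, sq_nonneg (spin b - u + (spin c - v))]
  rcases h0.eq_or_lt with rfl | hpos
  · simp
  · nlinarith

lemma bitCoupling_pos (z : Bool × Bool) : 0 < bitCoupling ρ u v z :=
  mul_pos (mul_pos (hu _) (hv _)) (one_add_mul_spin_sub_mul_spin_sub_pos hu hv h0 h1 _ _)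

lemma couplingRatio_pos (z : Bool × Bool) : 0 < couplingRatio ρ u v z :=
  div_pos (by linarith [three_quarters_le_one_add_mul_spin_mul_spin h0 h1 z.1 z.2])
    (one_add_mul_spin_sub_mul_spin_sub_pos hu hv h0 h1 _ _)

lemma bitCoupling_mul_couplingRatio (z : Bool × Bool) :
    bitCoupling ρ u v z * couplingRatio ρ u v z
      = (1 + spin z.1 * u) * (1 + spin z.2 * v) * (1 + ρ * (spin z.1 * spin z.2)) := by
  rw [bitCoupling, couplingRatio, mul_assoc,
    mul_div_cancel₀ _ (one_add_mul_spin_sub_mul_spin_sub_pos hu hv h0 h1 _ _).ne']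

lemma le_mul_log_couplingRatio (z : Bool × Bool) :
    ρ * (u * spin z.2 + v * spin z.1 - u * v) - 6 * ρ ^ 2 * (u ^ 2 + v ^ 2)
      ≤ (1 + ρ * ((spin z.1 - u) * (spin z.2 - v))) * Real.log (couplingRatio ρ u v z) := by
  set A := 1 + ρ * (spin z.1 * spin z.2) with hA
  set B := 1 + ρ * ((spin z.1 - u) * (spin z.2 - v)) with hB
  set d := u * spin z.2 + v * spin z.1 - u * v with hd
  have hA34 : 3 / 4 ≤ A := three_quarters_le_one_add_mul_spin_mul_spin h0 h1 z.1 z.2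
  have hA0 : 0 < A := by linarith
  have hB0 : 0 < B := one_add_mul_spin_sub_mul_spin_sub_pos hu hv h0 h1 z.1 z.2
  have hAB : A - B = ρ * d := by
    rw [hA, hB, hd]
    ring
  have hd_sq : d ^ 2 ≤ 9 / 2 * (u ^ 2 + v ^ 2) := by
    have huv : u ^ 2 * v ^ 2 ≤ (u ^ 2 + v ^ 2) / 2 := by
      nlinarith [sq_nonneg u, sq_nonneg v, sq_lt_one_of_one_add_spin_mul_pos hu,
        sq_lt_one_of_one_add_spin_mul_pos hv]
    nlinarith [sq_nonneg (u * spin z.2 - v * spin z.1), sq_nonneg (u * spin z.2 + u * v),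
      sq_nonneg (v * spin z.1 + u * v), spin_mul_self z.1, spin_mul_self z.2]
  have hremainder : (A - B) ^ 2 / A ≤ 6 * ρ ^ 2 * (u ^ 2 + v ^ 2) := by
    rw [div_le_iff₀ hA0, hAB, mul_pow]
    have hscale : 0 ≤ ρ ^ 2 * (u ^ 2 + v ^ 2) := by positivity
    nlinarith [mul_le_mul_of_nonneg_left hd_sq (sq_nonneg ρ)]
  calc ρ * d - 6 * ρ ^ 2 * (u ^ 2 + v ^ 2) ≤ (A - B) - (A - B) ^ 2 / A := by
        rw [← hAB]
        gcongr
    _ = B * (1 - (A / B)⁻¹) := by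
        field_simp
        ring
    _ ≤ B * Real.log (A / B) := by
        gcongr
        exact Real.one_sub_inv_le_log_of_pos (div_pos hA0 hB0)

lemma le_expect_bitCoupling_mul_log_couplingRatio :
    ρ * (u * v) - 6 * ρ ^ 2 * (u ^ 2 + v ^ 2)
      ≤ 𝔼 z, bitCoupling ρ u v z * Real.log (couplingRatio ρ u v z) :=
  calc ρ * (u * v) - 6 * ρ ^ 2 * (u ^ 2 + v ^ 2)
      = 𝔼 z : Bool × Bool, (1 + spin z.1 * u) * (1 + spin z.2 * v)
          * (ρ * (u * spin z.2 + v * spin z.1 - u * v) - 6 * ρ ^ 2 * (u ^ 2 + v ^ 2)) := by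
        simp only [expect_bool_prod, spin_true, spin_false]
        ring
    _ ≤ 𝔼 z, bitCoupling ρ u v z * Real.log (couplingRatio ρ u v z) :=
        expect_le_expect fun z _ => by
          rw [bitCoupling, mul_assoc _ (1 + ρ * _)]
          exact mul_le_mul_of_nonneg_left (le_mul_log_couplingRatio hu hv h0 h1 z)
            (mul_pos (hu _) (hv _)).le

end BitCoupling

/-! ### The logarithm of the noise form of two densities -/

lemma expect_mul_log_le_log_expect {ι : Type*} [Fintype ι] {ν T : ι → ℝ} (hν : ∀ i, 0 ≤ ν i)
    (hν_one : 𝔼 i, ν i = 1) (hT : ∀ i, 0 < T i) :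
    𝔼 i, ν i * Real.log (T i) ≤ Real.log (𝔼 i, ν i * T i) := by
  have hweights : ∑ i, ν i / Fintype.card ι = 1 := by
    rw [← sum_div, ← Fintype.expect_eq_sum_div_card, hν_one]
  have hjensen := strictConcaveOn_log_Ioi.concaveOn.le_map_sum
    (fun i _ => div_nonneg (hν i) (Nat.cast_nonneg (Fintype.card ι))) hweights fun i _ => hT i
  simpa only [Fintype.expect_eq_sum_div_card, sum_div, smul_eq_mul, div_mul_eq_mul_div]
    using hjensen

/-- The lower bound for the logarithm of the noise form of two densities that is carried through
the induction on the dimension in `noiseExponent_le_log_noiseForm`. -/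
def noiseExponent (ρ : ℝ) (a b : BoolCube n → ℝ) : ℝ :=
  ∑ k, meanForm ρ (coordMean a k) (coordMean b k) - 39 * ρ ^ 2 * (entropy a + entropy b)

lemma noiseExponent_succ_le {a b : BoolCube (n + 1) → ℝ} (ha : IsPosDensity a)
    (hb : IsPosDensity b) (ρ : ℝ) :
    noiseExponent ρ a b
      ≤ ρ * (coordMean a 0 * coordMean b 0) - 6 * ρ ^ 2 * (coordMean a 0 ^ 2 + coordMean b 0 ^ 2)
        + 𝔼 z, bitCoupling ρ (coordMean a 0) (coordMean b 0) z
          * noiseExponent ρ (condDensity a z.1) (condDensity b z.2) := by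
  set u := coordMean a 0
  set v := coordMean b 0
  have hu : ∀ c, 0 < 1 + spin c * u := ha.one_add_spin_mul_coordMean_pos
  have hv : ∀ c, 0 < 1 + spin c * v := hb.one_add_spin_mul_coordMean_pos
  have hmeans : ∑ k : Fin n, meanForm ρ (coordMean a k.succ) (coordMean b k.succ)
      ≤ 𝔼 z, bitCoupling ρ u v z * ∑ k,
          meanForm ρ (coordMean (condDensity a z.1) k) (coordMean (condDensity b z.2) k) := by
    simp only [ha.coordMean_succ, hb.coordMean_succ, mul_sum, expect_sum_comm]
    exact sum_le_sum fun k _ => meanForm_le_expect_bitCoupling_mul hu hv ρ _ _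
  have hentropy : (u ^ 2 + v ^ 2) / 6 + 𝔼 z, bitCoupling ρ u v z
      * (entropy (condDensity a z.1) + entropy (condDensity b z.2)) ≤ entropy a + entropy b := by
    simp only [mul_add, expect_add_distrib]
    rw [expect_bitCoupling_mul_fst ρ u v fun c => entropy (condDensity a c),
      expect_bitCoupling_mul_snd ρ u v fun c => entropy (condDensity b c),
      ha.entropy_eq_add_expect, hb.entropy_eq_add_expect]
    linarith [sq_div_six_le_entropy_bit hu, sq_div_six_le_entropy_bit hv]
  have hsplit : 𝔼 z, bitCoupling ρ u v z
        * noiseExponent ρ (condDensity a z.1) (condDensity b z.2)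
      = (𝔼 z, bitCoupling ρ u v z * ∑ k,
          meanForm ρ (coordMean (condDensity a z.1) k) (coordMean (condDensity b z.2) k))
        - 39 * ρ ^ 2 * 𝔼 z, bitCoupling ρ u v z
          * (entropy (condDensity a z.1) + entropy (condDensity b z.2)) := by
    simp only [noiseExponent, mul_expect, ← expect_sub_distrib]
    exact expect_congr rfl fun z _ => by ring
  have hscaled := mul_le_mul_of_nonneg_left hentropy (by positivity : 0 ≤ 39 * ρ ^ 2)
  rw [hsplit, noiseExponent, Fin.sum_univ_succ, meanForm]
  linarith

lemma le_log_noiseForm_succ (h0 : 0 ≤ ρ) (h1 : ρ ≤ 1 / 4) {a b : BoolCube (n + 1) → ℝ}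
    (ha : IsPosDensity a) (hb : IsPosDensity b) :
    ρ * (coordMean a 0 * coordMean b 0) - 6 * ρ ^ 2 * (coordMean a 0 ^ 2 + coordMean b 0 ^ 2)
        + 𝔼 z, bitCoupling ρ (coordMean a 0) (coordMean b 0) z
          * Real.log (noiseForm ρ (condDensity a z.1) (condDensity b z.2))
      ≤ Real.log (noiseForm ρ a b) := by
  set u := coordMean a 0
  set v := coordMean b 0
  have hu : ∀ c, 0 < 1 + spin c * u := ha.one_add_spin_mul_coordMean_pos
  have hv : ∀ c, 0 < 1 + spin c * v := hb.one_add_spin_mul_coordMean_pos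
  set N : Bool × Bool → ℝ := fun z => noiseForm ρ (condDensity a z.1) (condDensity b z.2)
  have hN : ∀ z, 0 < N z := fun z =>
    noiseForm_pos h0 (by linarith) (ha.cond z.1).pos (hb.cond z.2).pos
  have hratio : ∀ z, 0 < couplingRatio ρ u v z := couplingRatio_pos hu hv h0 h1
  have hform : noiseForm ρ a b = 𝔼 z, bitCoupling ρ u v z * (couplingRatio ρ u v z * N z) := by
    rw [noiseForm_cons]
    refine expect_congr rfl fun z _ => ?_
    rw [ha.fin_cons_eq, hb.fin_cons_eq, noiseForm_const_mul, ← mul_assoc (bitCoupling ρ u v z),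
      bitCoupling_mul_couplingRatio hu hv h0 h1]
    ring
  calc ρ * (u * v) - 6 * ρ ^ 2 * (u ^ 2 + v ^ 2) + 𝔼 z, bitCoupling ρ u v z * Real.log (N z)
      ≤ (𝔼 z, bitCoupling ρ u v z * Real.log (couplingRatio ρ u v z))
          + 𝔼 z, bitCoupling ρ u v z * Real.log (N z) := by
        gcongr
        exact le_expect_bitCoupling_mul_log_couplingRatio hu hv h0 h1
    _ = 𝔼 z, bitCoupling ρ u v z * Real.log (couplingRatio ρ u v z * N z) := by
        rw [← expect_add_distrib]
        refine expect_congr rfl fun z _ => ?_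
        rw [Real.log_mul (hratio z).ne' (hN z).ne', mul_add]
    _ ≤ Real.log (noiseForm ρ a b) :=
        hform ▸ expect_mul_log_le_log_expect (fun z => (bitCoupling_pos hu hv h0 h1 z).le)
          (expect_bitCoupling ρ u v) fun z => mul_pos (hratio z) (hN z)

theorem noiseExponent_le_log_noiseForm (h0 : 0 ≤ ρ) (h1 : ρ ≤ 1 / 4) {a b : BoolCube n → ℝ}
    (ha : IsPosDensity a) (hb : IsPosDensity b) :
    noiseExponent ρ a b ≤ Real.log (noiseForm ρ a b) := by
  induction n with
  | zero =>
    have hconst : ∀ {a : BoolCube 0 → ℝ}, IsPosDensity a → a = fun _ => 1 := fun ha => by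
      ext x
      rw [← ha.expect_eq_one, Fintype.expect_eq_sum_div_card, Fintype.sum_subsingleton _ x]
      simp
    simp [hconst ha, hconst hb, noiseExponent, entropy, noiseForm, noiseOp, noiseKernel]
  | succ n ih =>
    refine (noiseExponent_succ_le ha hb ρ).trans
      (le_trans ?_ (le_log_noiseForm_succ h0 h1 ha hb))
    gcongr with z
    · exact (bitCoupling_pos ha.one_add_spin_mul_coordMean_pos
        hb.one_add_spin_mul_coordMean_pos h0 h1 z).le
    · exact ih (ha.cond z.1) (hb.cond z.2)

lemma le_noiseForm_of_isPosDensity (h0 : 0 ≤ ρ) (h1 : ρ ≤ 1 / 4) {a b : BoolCube n → ℝ}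
    (ha : IsPosDensity a) (hb : IsPosDensity b) :
    1 + ρ * (coordMean a ⬝ᵥ coordMean b) - 39 * ρ ^ 2 * (entropy a + entropy b)
      ≤ noiseForm ρ a b := by
  have hmeans : ρ * (coordMean a ⬝ᵥ coordMean b)
      ≤ ∑ k, meanForm ρ (coordMean a k) (coordMean b k) := by
    rw [dotProduct, mul_sum]
    exact sum_le_sum fun k _ => le_add_of_nonneg_right (by positivity)
  have hexponent := noiseExponent_le_log_noiseForm h0 h1 ha hb
  have hlog := Real.log_le_sub_one_of_pos (noiseForm_pos h0 (by linarith) ha.pos hb.pos)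
  rw [noiseExponent] at hexponent
  linarith

lemma le_noiseForm_of_pos (h0 : 0 ≤ ρ) (h1 : ρ ≤ 1 / 4) {a b : BoolCube n → ℝ}
    (ha : ∀ x, 0 < a x) (hb : ∀ x, 0 < b x) :
    (𝔼 x, a x) * (𝔼 x, b x) + ρ * (coordMean a ⬝ᵥ coordMean b)
        - 39 * ρ ^ 2 * ((𝔼 x, b x) * entropy a + (𝔼 x, a x) * entropy b)
      ≤ noiseForm ρ a b := by
  have hmean : ∀ {a : BoolCube n → ℝ}, (∀ x, 0 < a x) → 0 < 𝔼 x, a x := fun ha =>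
    expect_pos (fun x _ => ha x) univ_nonempty
  have hcoordMean : ∀ {a : BoolCube n → ℝ}, (∀ x, 0 < a x) →
      coordMean a = (𝔼 x, a x) • coordMean (normalized a) := fun {a} ha => by
    ext k
    simp only [Pi.smul_apply, smul_eq_mul, coordMean, mul_expect, ← mul_assoc,
      congr_fun (expect_mul_normalized ha)]
  have hform : noiseForm ρ a b
      = (𝔼 x, a x) * (𝔼 x, b x) * noiseForm ρ (normalized a) (normalized b) := by
    rw [← noiseForm_const_mul, expect_mul_normalized ha, expect_mul_normalized hb]
  have hdensity := mul_le_mul_of_nonneg_left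
    (le_noiseForm_of_isPosDensity h0 h1 (isPosDensity_normalized ha) (isPosDensity_normalized hb))
    (mul_pos (hmean ha) (hmean hb)).le
  rw [hform, hcoordMean ha, hcoordMean hb, smul_dotProduct, dotProduct_smul, smul_eq_mul,
    smul_eq_mul, entropy_eq_expect_mul_entropy_normalized ha,
    entropy_eq_expect_mul_entropy_normalized hb]
  linarith

lemma noiseOp_spin (ρ : ℝ) (k : Fin n) (x : BoolCube n) :
    noiseOp ρ (fun z => spin (z k)) x = ρ * spin (x k) := by
  have hcentred := expect_noiseKernel_mul_centred ρ k (fun _ => 1) x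
  simp only [one_mul, mul_sub, expect_sub_distrib, ← expect_mul, expect_noiseKernel] at hcentred
  simpa [noiseOp, dd, sub_eq_zero] using hcentred

lemma coordMean_noiseOp (ρ : ℝ) (a : BoolCube n → ℝ) :
    coordMean (noiseOp ρ a) = ρ • coordMean a := by
  ext k
  calc coordMean (noiseOp ρ a) k = noiseForm ρ (fun z => spin (z k)) a := by
        simp only [coordMean, noiseForm, mul_comm]
    _ = ρ * coordMean a k := by
        rw [noiseForm_comm]
        simp only [noiseForm, noiseOp_spin, coordMean, mul_expect, mul_left_comm]

lemma expect_noiseOp (ρ : ℝ) (a : BoolCube n → ℝ) : 𝔼 x, noiseOp ρ a x = 𝔼 x, a x :=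
  calc 𝔼 x, noiseOp ρ a x = noiseForm ρ (fun _ => 1) a := by simp only [noiseForm, one_mul]
    _ = 𝔼 x, a x := by
        rw [noiseForm_comm]
        simp only [noiseForm, noiseOp, mul_one, expect_noiseKernel]

-- Smoothing both functions by `T_{1/2}` makes them positive and costs only a factor `4` in
-- the noise parameter, as `T_ρ = T_{1/2} T_{4ρ} T_{1/2}`.
lemma le_noiseForm_of_nonneg (h0 : 0 ≤ ρ) (h1 : ρ ≤ 1 / 16) {a b : BoolCube n → ℝ}
    (ha : ∀ x, 0 ≤ a x) (hb : ∀ x, 0 ≤ b x) :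
    (𝔼 x, a x) * (𝔼 x, b x) + ρ * (coordMean a ⬝ᵥ coordMean b)
        - 624 * ρ ^ 2 * ((𝔼 x, b x) * entropy (noiseOp (1 / 2) a)
          + (𝔼 x, a x) * entropy (noiseOp (1 / 2) b))
      ≤ noiseForm ρ a b := by
  rcases eq_or_ne a 0 with rfl | hane
  · simp [coordMean, dotProduct, entropy, noiseOp, noiseForm]
  rcases eq_or_ne b 0 with rfl | hbne
  · simp [coordMean, dotProduct, entropy, noiseOp, noiseForm]
  have hsmooth := le_noiseForm_of_pos (ρ := 4 * ρ) (by linarith) (by linarith)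
    (noiseOp_pos (by norm_num) (by norm_num : (1 / 2 : ℝ) < 1) ha hane)
    (noiseOp_pos (by norm_num) (by norm_num : (1 / 2 : ℝ) < 1) hb hbne)
  rw [expect_noiseOp, expect_noiseOp, coordMean_noiseOp, coordMean_noiseOp, smul_dotProduct,
    dotProduct_smul, smul_eq_mul, smul_eq_mul, noiseForm_noiseOp,
    show 1 / 2 * (4 * ρ) * (1 / 2) = ρ by ring] at hsmooth
  linarith

/-! ### The entropy of the gradients -/

lemma mul_mul_log_le {Q r y : ℝ} (hQ : 0 ≤ Q) (hr : 0 < r) (hy : 0 ≤ y) :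
    Q * (y * Real.log y) ≤ Q * y * (Real.log Q - Real.log r - 1) + r * y ^ 2 := by
  rcases hQ.eq_or_lt with rfl | hQ
  · simpa using mul_nonneg hr.le (sq_nonneg y)
  rcases hy.eq_or_lt with rfl | hy
  · simp
  have hlog := Real.log_le_sub_one_of_pos (by positivity : 0 < r * y / Q)
  rw [Real.log_div (by positivity) hQ.ne', Real.log_mul hr.ne' hy.ne'] at hlog
  have hscaled := mul_le_mul_of_nonneg_left hlog (mul_pos hQ hy).le
  rw [show Q * y * (r * y / Q - 1) = r * y ^ 2 - Q * y by field_simp] at hscaled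
  linarith

-- Comparing `a` with the mean of `b` and `b` with the mean of `a` costs the logarithms of the
-- two reciprocal ratios of the means, which cancel.
lemma expect_mul_entropy_add_expect_mul_entropy_le {Ω : Type*} [Fintype Ω] {a b : Ω → ℝ}
    (ha : ∀ x, 0 ≤ a x) (hb : ∀ x, 0 ≤ b x) {r : ℝ} (hr : 0 < r) :
    (𝔼 x, b x) * entropy a + (𝔼 x, a x) * entropy b
      ≤ 2 * ((𝔼 x, a x) * 𝔼 x, b x) * (-Real.log r - 1)
        + r * ((𝔼 x, a x ^ 2) + 𝔼 x, b x ^ 2) := by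
  have hcompare : ∀ {a : Ω → ℝ} (Q : ℝ), (∀ x, 0 ≤ a x) → 0 ≤ Q →
      Q * 𝔼 x, a x * Real.log (a x)
        ≤ Q * (𝔼 x, a x) * (Real.log Q - Real.log r - 1) + r * 𝔼 x, a x ^ 2 := fun Q ha hQ => by
    simp only [mul_expect, expect_mul, ← expect_add_distrib]
    exact expect_le_expect fun x _ => mul_mul_log_le hQ hr (ha x)
  have hab := hcompare (𝔼 x, b x) ha (expect_nonneg fun x _ => hb x)
  have hba := hcompare (𝔼 x, a x) hb (expect_nonneg fun x _ => ha x)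
  simp only [entropy]
  linarith

/-- The pairing `⟨E ∇f, E ∇g⟩` of the mean discrete gradients. -/
def meanGradInner (f g : BoolCube n → ℝ) : ℝ := ∑ i, (𝔼 x, dd n i f x) * 𝔼 x, dd n i g x

lemma meanGradInner_nonneg (hf : CubeIncreasing n f) (hg : CubeIncreasing n g) :
    0 ≤ meanGradInner f g :=
  sum_nonneg fun i _ =>
    mul_nonneg (expect_nonneg fun x _ => hf i x) (expect_nonneg fun x _ => hg i x)

lemma meanGradInner_le_one (hf : ∀ x, f x ∈ Set.Icc 0 1) (hg : ∀ x, g x ∈ Set.Icc 0 1) :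
    meanGradInner f g ≤ 1 := by
  have hamgm : 2 * meanGradInner f g
      ≤ ∑ i, (𝔼 x, dd n i f x) ^ 2 + ∑ i, (𝔼 x, dd n i g x) ^ 2 := by
    rw [meanGradInner, mul_sum, ← sum_add_distrib]
    exact sum_le_sum fun i _ => by rw [← mul_assoc]; exact two_mul_le_add_sq _ _
  linarith [sum_expect_dd_sq_le hf, sum_expect_dd_sq_le hg]

lemma sum_infl_mul_infl (hf : CubeIncreasing n f) (hg : CubeIncreasing n g) :
    ∑ i, infl n f i * infl n g i = 4 * meanGradInner f g := by
  have hinfl : ∀ {f : BoolCube n → ℝ}, CubeIncreasing n f → ∀ i,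
      infl n f i = 2 * 𝔼 x, dd n i f x := fun hf i => by
    simp only [infl, cubeE_eq_expect, abs_of_nonneg (hf i _)]
  simp only [hinfl hf, hinfl hg, meanGradInner, mul_sum]
  exact sum_congr rfl fun i _ => by ring

lemma sum_entropy_noiseOp_half_dd_le (hf : ∀ x, f x ∈ Set.Icc 0 1) (hg : ∀ x, g x ∈ Set.Icc 0 1)
    (hfinc : CubeIncreasing n f) (hginc : CubeIncreasing n g) (hpos : 0 < meanGradInner f g) :
    ∑ i, ((𝔼 x, dd n i g x) * entropy (noiseOp (1 / 2) (dd n i f))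
        + (𝔼 x, dd n i f x) * entropy (noiseOp (1 / 2) (dd n i g)))
      ≤ 2 * meanGradInner f g * (1 - Real.log (2 * meanGradInner f g)) := by
  set w := meanGradInner f g with hw
  set r := 2 * w / Real.exp 1 with hr
  have hsmooth_nonneg : ∀ {f : BoolCube n → ℝ}, CubeIncreasing n f →
      ∀ i x, 0 ≤ noiseOp (1 / 2) (dd n i f) x := fun hf i =>
    noiseOp_nonneg (by norm_num) (by norm_num) (hf i)
  have hterm := fun i => expect_mul_entropy_add_expect_mul_entropy_le
    (hsmooth_nonneg hfinc i) (hsmooth_nonneg hginc i) (by positivity : 0 < r)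
  simp only [expect_noiseOp] at hterm
  have hlog : -Real.log r - 1 = -Real.log (2 * w) := by
    rw [hr, Real.log_div (by positivity) (Real.exp_ne_zero 1), Real.log_exp]
    ring
  have hr_le : r ≤ 3 / 4 * w := by
    rw [hr, div_le_iff₀ (Real.exp_pos 1)]
    nlinarith [Real.exp_one_gt_d9]
  calc _ ≤ ∑ i, (2 * ((𝔼 x, dd n i f x) * 𝔼 x, dd n i g x) * (-Real.log r - 1)
          + r * ((𝔼 x, noiseOp (1 / 2) (dd n i f) x ^ 2)
            + 𝔼 x, noiseOp (1 / 2) (dd n i g) x ^ 2)) := sum_le_sum fun i _ => hterm i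
    _ = 2 * w * -Real.log (2 * w) + r * (∑ i, 𝔼 x, noiseOp (1 / 2) (dd n i f) x ^ 2
          + ∑ i, 𝔼 x, noiseOp (1 / 2) (dd n i g) x ^ 2) := by
        rw [sum_add_distrib, ← sum_mul, ← mul_sum, ← mul_sum, sum_add_distrib, hlog, hw,
          meanGradInner]
    _ ≤ 2 * w * -Real.log (2 * w) + 3 / 4 * w * (4 / 3 + 4 / 3) := by
        gcongr
        · exact sum_expect_noiseOp_half_dd_sq_le hf
        · exact sum_expect_noiseOp_half_dd_sq_le hg
    _ = 2 * w * (1 - Real.log (2 * w)) := by ring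

/-! ### The correlation inequality -/

lemma half_meanGradInner_le_sum_noiseForm_dd
    (hf : ∀ x, f x ∈ Set.Icc 0 1) (hg : ∀ x, g x ∈ Set.Icc 0 1)
    (hfinc : CubeIncreasing n f) (hginc : CubeIncreasing n g) (hpos : 0 < meanGradInner f g)
    (hcorr : 0 ≤ ∑ i, coordMean (dd n i f) ⬝ᵥ coordMean (dd n i g))
    (h0 : 0 ≤ ρ) (h1 : ρ ≤ 1 / 16)
    (hρ : ρ ^ 2 * (1 - Real.log (2 * meanGradInner f g)) ≤ 1 / 2500) :
    meanGradInner f g / 2 ≤ ∑ i, noiseForm ρ (dd n i f) (dd n i g) := by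
  have hsum := sum_le_sum fun i (_ : i ∈ univ) =>
    le_noiseForm_of_nonneg h0 h1 (hfinc i) (hginc i)
  rw [sum_sub_distrib, sum_add_distrib, ← mul_sum, ← mul_sum, ← meanGradInner] at hsum
  have hentropy := mul_le_mul_of_nonneg_left
    (sum_entropy_noiseOp_half_dd_le hf hg hfinc hginc hpos)
    (by positivity : 0 ≤ 624 * ρ ^ 2)
  have hsmall := mul_le_mul_of_nonneg_left hρ (by positivity : 0 ≤ 1248 * meanGradInner f g)
  linarith [mul_nonneg h0 hcorr]

lemma cubeCor_eq_noiseForm_sub (f g : BoolCube n → ℝ) :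
    cubeCor n f g = noiseForm 1 f g - noiseForm 0 f g := by
  simp only [cubeCor, cubeE_eq_expect, noiseForm_one, noiseForm_zero]

lemma mul_le_cubeCor_of_le_sum_noiseForm_dd (hf : CubeIncreasing n f) (hg : CubeIncreasing n g)
    {c t : ℝ} (ht0 : 0 ≤ t) (ht1 : t ≤ 1)
    (hc : ∀ s ∈ Set.Icc 0 t, c ≤ ∑ i, noiseForm s (dd n i f) (dd n i g)) :
    c / 4 * t ≤ cubeCor n f g := by
  have hmvt := (convex_Icc 0 t).mul_sub_le_image_sub_of_le_deriv
    (fun s _ => (hasDerivAt_noiseForm s f g).continuousAt.continuousWithinAt)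
    (fun s _ => (hasDerivAt_noiseForm s f g).differentiableAt.differentiableWithinAt)
    (fun s hs => by
      rw [(hasDerivAt_noiseForm s f g).deriv]
      exact div_le_div_of_nonneg_right (hc s (interior_subset hs)) zero_le_four)
    0 (Set.left_mem_Icc.2 ht0) t (Set.right_mem_Icc.2 ht0) ht0
  have htail : noiseForm t f g ≤ noiseForm 1 f g :=
    monotoneOn_noiseForm hf hg ⟨ht0, ht1⟩ (Set.right_mem_Icc.2 zero_le_one) ht1
  rw [cubeCor_eq_noiseForm_sub]
  linarith

lemma meanGradInner_div_sqrt_le_cubeCor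
    (hf : ∀ x, f x ∈ Set.Icc 0 1) (hg : ∀ x, g x ∈ Set.Icc 0 1)
    (hfinc : CubeIncreasing n f) (hginc : CubeIncreasing n g) (hpos : 0 < meanGradInner f g)
    (hcorr : 0 ≤ ∑ i, coordMean (dd n i f) ⬝ᵥ coordMean (dd n i g)) :
    meanGradInner f g / (400 * √(1 - Real.log (2 * meanGradInner f g))) ≤ cubeCor n f g := by
  set Λ := 1 - Real.log (2 * meanGradInner f g)
  have hΛ_ge : (1 / 2) ^ 2 ≤ Λ := by
    have hlog := Real.log_le_log (by positivity)
      (by linarith [meanGradInner_le_one hf hg] : 2 * meanGradInner f g ≤ 2)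
    linarith [Real.log_two_lt_d9]
  have hsqrt_ge : 1 / 2 ≤ √Λ := Real.le_sqrt_of_sq_le hΛ_ge
  set t := 1 / (50 * √Λ) with ht
  have ht_nonneg : 0 ≤ t := by positivity
  have ht_le : t ≤ 1 / 16 := one_div_le_one_div_of_le (by norm_num) (by linarith)
  have htΛ : t ^ 2 * Λ = 1 / 2500 := by
    rw [ht, div_pow, mul_pow, Real.sq_sqrt (by linarith)]
    field_simp [(by linarith : Λ ≠ 0)]
    norm_num
  calc meanGradInner f g / (400 * √Λ) = meanGradInner f g / 2 / 4 * t := by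
        rw [ht]
        field_simp
        norm_num
    _ ≤ cubeCor n f g := by
        refine mul_le_cubeCor_of_le_sum_noiseForm_dd hfinc hginc ht_nonneg (by linarith)
          fun s hs => half_meanGradInner_le_sum_noiseForm_dd hf hg hfinc hginc hpos hcorr hs.1
            (hs.2.trans ht_le) ?_
        calc s ^ 2 * Λ ≤ t ^ 2 * Λ :=
              mul_le_mul_of_nonneg_right (pow_le_pow_left₀ hs.1 hs.2 2) (by linarith)
          _ ≤ 1 / 2500 := htΛ.le

lemma cubeCor_nonneg (hf : CubeIncreasing n f) (hg : CubeIncreasing n g) : 0 ≤ cubeCor n f g := by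
  rw [cubeCor_eq_noiseForm_sub, sub_nonneg]
  exact monotoneOn_noiseForm hf hg (Set.left_mem_Icc.2 zero_le_one)
    (Set.right_mem_Icc.2 zero_le_one) zero_le_one

lemma BoolValued.mem_Icc (hf : BoolValued n f) (x : BoolCube n) : f x ∈ Set.Icc 0 1 := by
  rcases hf x with h | h <;> simp [h]

lemma Antipodal.dd_not (hg : Antipodal n g) (i : Fin n) (x : BoolCube n) :
    dd n i g (fun k => !(x k)) = dd n i g x := by
  have hflip : ∀ b, (fun k => !(update x i b k)) = update (fun k => !(x k)) i !b := fun b =>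
    funext fun k => by rcases eq_or_ne k i with rfl | hk <;> simp [*]
  rw [dd, dd, hg (update x i true), hg (update x i false), hflip, hflip, Bool.not_true,
    Bool.not_false]
  ring

lemma Antipodal.coordMean_dd (hg : Antipodal n g) (i : Fin n) : coordMean (dd n i g) = 0 := by
  funext k
  have hodd := expect_not fun x => dd n i g x * spin (x k)
  simp only [hg.dd_not, spin_not, mul_neg, expect_neg_distrib] at hodd
  exact self_eq_neg.mp hodd.symm

-- The last hypothesis is a condition on the second level of the Fourier expansions: the sum is
-- eight times `∑ f̂(S) ĝ(S)` over the sets `S` of size two.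
theorem correlation_antipodal_general :
    ∃ c > (0 : ℝ), ∀ (n : ℕ) (f g : (Fin n → Bool) → ℝ),
      (∀ σ, f σ ∈ Set.Icc 0 1) → (∀ σ, g σ ∈ Set.Icc 0 1) →
      CubeIncreasing n f → CubeIncreasing n g →
      0 ≤ ∑ i, coordMean (dd n i f) ⬝ᵥ coordMean (dd n i g) →
      cubeCor n f g ≥
        c * (∑ i, infl n f i * infl n g i) /
          Real.sqrt (Real.log (2 * Real.exp 1 / ∑ i, infl n f i * infl n g i)) := by
  refine ⟨1 / 1600, by norm_num, fun n f g hf hg hfinc hginc hcorr => ?_⟩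
  rw [sum_infl_mul_infl hfinc hginc]
  rcases (meanGradInner_nonneg hfinc hginc).eq_or_lt with hzero | hpos
  · simpa [← hzero] using cubeCor_nonneg hfinc hginc
  have hlog : Real.log (2 * Real.exp 1 / (4 * meanGradInner f g))
      = 1 - Real.log (2 * meanGradInner f g) := by
    rw [← Real.log_exp 1, ← Real.log_div (Real.exp_ne_zero 1) (by positivity), Real.log_exp]
    congr 1
    field_simp
    norm_num
  calc 1 / 1600 * (4 * meanGradInner f g)
        / √(Real.log (2 * Real.exp 1 / (4 * meanGradInner f g)))
      = meanGradInner f g / (400 * √(1 - Real.log (2 * meanGradInner f g))) := by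
        rw [hlog, ← div_div]
        ring
    _ ≤ cubeCor n f g := meanGradInner_div_sqrt_le_cubeCor hf hg hfinc hginc hpos hcorr

end NoiseForm

/-- **Theorem 1.2.** If `f, g` are increasing Boolean functions and `g` is antipodal, then
`Cor(f,g) ≥ c ⬝ (∑ᵢ Iᵢ(f) Iᵢ(g)) / √(log(2e / ∑ᵢ Iᵢ(f) Iᵢ(g)))`. -/
theorem correlation_antipodal :
    ∃ c > (0 : ℝ), ∀ (n : ℕ) (f g : (Fin n → Bool) → ℝ),
      BoolValued n f → BoolValued n g →
      CubeIncreasing n f → CubeIncreasing n g →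
      Antipodal n g →
      cubeCor n f g ≥
        c * (∑ i, infl n f i * infl n g i) /
          Real.sqrt (Real.log (2 * Real.exp 1 / ∑ i, infl n f i * infl n g i)) := by
  obtain ⟨c, hc, hcor⟩ := correlation_antipodal_general
  exact ⟨c, hc, fun n f g hf hg hfinc hginc hanti =>
    hcor n f g hf.mem_Icc hg.mem_Icc hfinc hginc (by simp [hanti.coordMean_dd])⟩

end
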